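/- There exists an absolute constant Cst > 0 such that for every prime p, every integer l ≥ 0, every z ∈ ℍ with Im z ≥ 1, every g ∈ SL₂(ℤ), and every δ' with 0 < δ' < 1, one has M(z, g; δ', p^l, 1) ≤ Cst·( 1 + √δ'·(Im z)/p^l ). -/

import Mathlib

/-- The hyperbolic point-pair invariant `u(z,w) = |z−w|² / (Im z · Im w)`. -/
noncomputable def uInv (z w : ℂ) : ℝ := ‖z - w‖ ^ 2 / (z.im * w.im)

/-- The Möbius action of an integer matrix on the upper half-plane. -/
noncomputable def moeb (γ : Matrix (Fin 2) (Fin 2) ℤ) (z : ℂ) : ℂ :=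
  (((γ 0 0 : ℤ) : ℂ) * z + ((γ 0 1 : ℤ) : ℂ)) / (((γ 1 0 : ℤ) : ℂ) * z + ((γ 1 1 : ℤ) : ℂ))

/-- `M(z,g;δ,L,m)`: the number of matrices `γ ∈ M₂(ℤ)` with `det γ = m`, `u(γ·z, z) ≤ δ`,
and both off-diagonal entries of `g⁻¹γg` divisible by `L`. -/
noncomputable def Mcount (z : ℂ) (g : Matrix.SpecialLinearGroup (Fin 2) ℤ) (δ : ℝ)
    (L m : ℕ) : ℕ :=
  Set.ncard {γ : Matrix (Fin 2) (Fin 2) ℤ | γ.det = (m : ℤ) ∧ uInv (moeb γ z) z ≤ δ ∧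
    (L : ℤ) ∣ (((g⁻¹ : Matrix.SpecialLinearGroup (Fin 2) ℤ) : Matrix (Fin 2) (Fin 2) ℤ) * γ *
      (g : Matrix (Fin 2) (Fin 2) ℤ)) 0 1 ∧
    (L : ℤ) ∣ (((g⁻¹ : Matrix.SpecialLinearGroup (Fin 2) ℤ) : Matrix (Fin 2) (Fin 2) ℤ) * γ *
      (g : Matrix (Fin 2) (Fin 2) ℤ)) 1 0}

/-!
For `γ = [[a, b], [c, d]]` let `F(z) = az + b - z(cz + d)`, so that `γz - z = F(z) / (cz + d)` and
`u(γz, z) = |F(z)|² / (det γ · y²)` with `y = Im z`. The identity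
`(a + d)² y² + (2cy² - Re F(z))² = 4 det γ · y² + |F(z)|²` shows that when `u(γz, z)` is bounded, so
are `a + d`, `cy` and `Im F(z) / y = a - d - 2c Re z`. For `y ≥ 1` this leaves boundedly many
integral `γ` of determinant one with `c ≠ 0`, since these three quantities then determine `γ`. If
`c = 0` then `γ = ±[[1, b], [0, 1]]` and `F(z) = ±b`, so `|b| ≤ √δ y`; the congruence condition
makes `b` times the squares of two coprime entries of `g` divisible by `L`, hence `L ∣ b`.
-/

section Displacement

variable {γ : Matrix (Fin 2) (Fin 2) ℤ} {z : ℂ} {δ : ℝ}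

/-- The quadratic polynomial `az + b - z(cz + d)` attached to `γ = [[a, b], [c, d]]`. It vanishes at
the fixed points of `γ`, and its size measures how far `γ` moves `z`. -/
noncomputable def fixedPointPoly (γ : Matrix (Fin 2) (Fin 2) ℤ) (z : ℂ) : ℂ :=
  γ 0 0 * z + γ 0 1 - z * (γ 1 0 * z + γ 1 1)

lemma fixedPointPoly_re (γ : Matrix (Fin 2) (Fin 2) ℤ) (z : ℂ) :
    (fixedPointPoly γ z).re =
      γ 1 0 * (z.im ^ 2 - z.re ^ 2) + (γ 0 0 - γ 1 1) * z.re + γ 0 1 := by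
  simp only [fixedPointPoly, Complex.sub_re, Complex.add_re, Complex.mul_re, Complex.add_im,
    Complex.mul_im, Complex.intCast_re, Complex.intCast_im]
  ring

lemma fixedPointPoly_im (γ : Matrix (Fin 2) (Fin 2) ℤ) (z : ℂ) :
    (fixedPointPoly γ z).im = (γ 0 0 - γ 1 1 - 2 * γ 1 0 * z.re) * z.im := by
  simp only [fixedPointPoly, Complex.sub_im, Complex.add_re, Complex.mul_re, Complex.add_im,
    Complex.mul_im, Complex.intCast_re, Complex.intCast_im]
  ring

lemma intCast_det_fin_two {R : Type*} [Ring R] (γ : Matrix (Fin 2) (Fin 2) ℤ) :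
    (γ.det : R) = γ 0 0 * γ 1 1 - γ 0 1 * γ 1 0 := by
  rw [Matrix.det_fin_two]
  push_cast
  rfl

lemma moeb_denom_ne_zero (hz : z.im ≠ 0) (hγ : γ.det ≠ 0) : (γ 1 0 * z + γ 1 1 : ℂ) ≠ 0 := by
  intro hzero
  have hc : γ 1 0 = 0 := by simpa [hz] using congrArg Complex.im hzero
  have hd : γ 1 1 = 0 := by simpa [hc] using hzero
  exact hγ (by simp [Matrix.det_fin_two, hc, hd])

lemma moeb_im (γ : Matrix (Fin 2) (Fin 2) ℤ) (z : ℂ) :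
    (moeb γ z).im = γ.det * z.im / Complex.normSq (γ 1 0 * z + γ 1 1) := by
  rw [moeb, Complex.div_im, ← sub_div, intCast_det_fin_two]
  congr 1
  simp only [Complex.add_re, Complex.mul_re, Complex.add_im, Complex.mul_im, Complex.intCast_re,
    Complex.intCast_im]
  ring

lemma moeb_sub_self (hz : z.im ≠ 0) (hγ : γ.det ≠ 0) :
    moeb γ z - z = fixedPointPoly γ z / (γ 1 0 * z + γ 1 1) := by
  rw [moeb, fixedPointPoly, sub_div, mul_div_cancel_right₀ _ (moeb_denom_ne_zero hz hγ)]

lemma uInv_moeb_self (hz : z.im ≠ 0) (hγ : γ.det ≠ 0) :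
    uInv (moeb γ z) z = Complex.normSq (fixedPointPoly γ z) / (γ.det * z.im ^ 2) := by
  have hdenom : Complex.normSq (γ 1 0 * z + γ 1 1) ≠ 0 :=
    Complex.normSq_eq_zero.not.mpr (moeb_denom_ne_zero hz hγ)
  rw [uInv, moeb_sub_self hz hγ, moeb_im, ← Complex.normSq_eq_norm_sq, Complex.normSq_div]
  field_simp

lemma normSq_fixedPointPoly_le (hz : z.im ≠ 0) (hγ : 0 < γ.det) (hu : uInv (moeb γ z) z ≤ δ) :
    Complex.normSq (fixedPointPoly γ z) ≤ δ * γ.det * z.im ^ 2 := by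
  have hdet : (0 : ℝ) < γ.det := mod_cast hγ
  rwa [uInv_moeb_self hz hγ.ne', div_le_iff₀ (by positivity), ← mul_assoc] at hu

lemma trace_sq_add_sq_eq_det_add_normSq (γ : Matrix (Fin 2) (Fin 2) ℤ) (z : ℂ) :
    (γ.trace : ℝ) ^ 2 * z.im ^ 2 + (2 * γ 1 0 * z.im ^ 2 - (fixedPointPoly γ z).re) ^ 2 =
      4 * γ.det * z.im ^ 2 + Complex.normSq (fixedPointPoly γ z) := by
  rw [Complex.normSq_apply, fixedPointPoly_re, fixedPointPoly_im, Matrix.trace_fin_two,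
    intCast_det_fin_two]
  push_cast
  ring

lemma trace_sq_le (hz : z.im ≠ 0) (hγ : 0 < γ.det) (hu : uInv (moeb γ z) z ≤ δ) :
    (γ.trace : ℝ) ^ 2 ≤ (4 + δ) * γ.det := by
  refine le_of_mul_le_mul_right ?_ (sq_pos_of_ne_zero hz)
  linarith [trace_sq_add_sq_eq_det_add_normSq γ z, normSq_fixedPointPoly_le hz hγ hu,
    sq_nonneg (2 * γ 1 0 * z.im ^ 2 - (fixedPointPoly γ z).re)]

lemma lower_left_mul_im_sq_le (hz : z.im ≠ 0) (hγ : 0 < γ.det) (hu : uInv (moeb γ z) z ≤ δ) :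
    (γ 1 0 * z.im) ^ 2 ≤ (2 + δ) * γ.det := by
  set F := fixedPointPoly γ z
  have hsq : (2 * γ 1 0 * z.im ^ 2) ^ 2 ≤
      2 * ((2 * γ 1 0 * z.im ^ 2 - F.re) ^ 2 + F.re ^ 2) := by
    linarith [sq_nonneg (2 * γ 1 0 * z.im ^ 2 - 2 * F.re)]
  have hdiff : (2 * γ 1 0 * z.im ^ 2 - F.re) ^ 2 ≤ 4 * γ.det * z.im ^ 2 + Complex.normSq F := by
    linarith [trace_sq_add_sq_eq_det_add_normSq γ z, mul_nonneg (sq_nonneg (γ.trace : ℝ))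
      (sq_nonneg z.im)]
  have hre : F.re ^ 2 ≤ Complex.normSq F := by
    simpa only [sq] using Complex.re_sq_le_normSq F
  refine le_of_mul_le_mul_right ?_ (sq_pos_of_ne_zero hz)
  linarith [normSq_fixedPointPoly_le hz hγ hu]

lemma diag_sub_sq_le (hz : z.im ≠ 0) (hγ : 0 < γ.det) (hu : uInv (moeb γ z) z ≤ δ) :
    (γ 0 0 - γ 1 1 - 2 * γ 1 0 * z.re : ℝ) ^ 2 ≤ δ * γ.det := by
  refine le_of_mul_le_mul_right ?_ (sq_pos_of_ne_zero hz)
  calc (γ 0 0 - γ 1 1 - 2 * γ 1 0 * z.re : ℝ) ^ 2 * z.im ^ 2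
      = (fixedPointPoly γ z).im ^ 2 := by rw [fixedPointPoly_im, mul_pow]
    _ ≤ Complex.normSq (fixedPointPoly γ z) := by
      simpa only [sq] using Complex.im_sq_le_normSq (fixedPointPoly γ z)
    _ ≤ δ * γ.det * z.im ^ 2 := normSq_fixedPointPoly_le hz hγ hu

end Displacement

section LowerLeftNeZero

lemma eq_of_lower_left_ne_zero {R : Type*} [CommRing R] [IsDomain R] [NeZero (2 : R)]
    {γ γ' : Matrix (Fin 2) (Fin 2) R} (hc : γ 1 0 ≠ 0) (hdet : γ.det = γ'.det)
    (hlower : γ 1 0 = γ' 1 0) (htrace : γ.trace = γ'.trace)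
    (hdiag : γ 0 0 - γ 1 1 = γ' 0 0 - γ' 1 1) : γ = γ' := by
  rw [Matrix.trace_fin_two, Matrix.trace_fin_two] at htrace
  have ha : γ 0 0 = γ' 0 0 :=
    mul_left_cancel₀ (two_ne_zero (α := R)) (by linear_combination htrace + hdiag)
  have hd : γ 1 1 = γ' 1 1 := by linear_combination htrace - ha
  rw [Matrix.det_fin_two, Matrix.det_fin_two, ha, hd, ← hlower] at hdet
  have hb : γ 0 1 = γ' 0 1 := mul_right_cancel₀ hc (sub_right_injective hdet)
  rw [Matrix.eta_fin_two γ, Matrix.eta_fin_two γ', ha, hb, hlower, hd]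

lemma sub_floor_mem_Icc_of_abs_sub_le_one {n : ℤ} {x : ℝ} (h : |n - x| ≤ 1) :
    n - ⌊x⌋ ∈ Set.Icc (-1) 2 := by
  obtain ⟨hlower, hupper⟩ := abs_le.mp h
  have hfloor : ⌊x⌋ ≤ n + 1 := by
    exact_mod_cast (Int.floor_le x).trans (by linarith : x ≤ n + 1)
  have hn : n < ⌊x⌋ + 2 := by
    exact_mod_cast (by linarith [Int.lt_floor_add_one x] : (n : ℝ) < ⌊x⌋ + 2)
  exact ⟨by lia, by lia⟩

variable {γ : Matrix (Fin 2) (Fin 2) ℤ} {z : ℂ} {δ : ℝ}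

lemma abs_lower_left_le_one (hz : 1 ≤ z.im) (hδ : δ ≤ 1) (hγ : γ.det = 1)
    (hu : uInv (moeb γ z) z ≤ δ) : |γ 1 0| ≤ 1 := by
  have hcy := lower_left_mul_im_sq_le (by positivity) (by lia) hu
  rw [hγ, Int.cast_one, mul_one, mul_pow] at hcy
  have hc : (γ 1 0 : ℝ) ^ 2 < 2 ^ 2 := by
    nlinarith [sq_nonneg (γ 1 0 : ℝ), one_le_pow₀ hz (n := 2)]
  exact Int.lt_add_one_iff.mp (abs_lt_of_sq_lt_sq (mod_cast hc) (by norm_num))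

lemma abs_trace_le_two (hz : z.im ≠ 0) (hδ : δ ≤ 1) (hγ : γ.det = 1)
    (hu : uInv (moeb γ z) z ≤ δ) : |γ.trace| ≤ 2 := by
  have htrace := trace_sq_le hz (by lia) hu
  rw [hγ, Int.cast_one, mul_one] at htrace
  have hlt : (γ.trace : ℝ) ^ 2 < 3 ^ 2 := by linarith
  exact Int.lt_add_one_iff.mp (abs_lt_of_sq_lt_sq (mod_cast hlt) (by norm_num))

lemma encard_lower_left_ne_zero_le (hz : 1 ≤ z.im) (hδ : δ ≤ 1) :
    {γ : Matrix (Fin 2) (Fin 2) ℤ | γ.det = 1 ∧ uInv (moeb γ z) z ≤ δ ∧ γ 1 0 ≠ 0}.encard ≤ 60 := by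
  let box : Finset (ℤ × ℤ × ℤ) := Finset.Icc (-1) 1 ×ˢ Finset.Icc (-2) 2 ×ˢ Finset.Icc (-1) 2
  have hbox : (box : Set (ℤ × ℤ × ℤ)).encard = 60 := by
    rw [Set.encard_coe_eq_coe_finsetCard]
    rfl
  rw [← hbox]
  refine Set.encard_le_encard_of_injOn
    (f := fun γ ↦ (γ 1 0, γ.trace, γ 0 0 - γ 1 1 - ⌊2 * (γ 1 0 : ℝ) * z.re⌋)) ?_ ?_
  · rintro γ ⟨hγ, hu, -⟩
    have hz₀ : z.im ≠ 0 := by positivity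
    have hdiag : |((γ 0 0 - γ 1 1 : ℤ) : ℝ) - 2 * γ 1 0 * z.re| ≤ 1 := by
      rw [← sq_le_one_iff_abs_le_one]
      have hsq := diag_sub_sq_le hz₀ (by lia) hu
      rw [hγ, Int.cast_one, mul_one] at hsq
      exact_mod_cast hsq.trans hδ
    simp only [box, Finset.coe_product, Finset.coe_Icc, Set.mem_prod]
    exact ⟨abs_le.mp (abs_lower_left_le_one hz hδ hγ hu), abs_le.mp (abs_trace_le_two hz₀ hδ hγ hu),
      sub_floor_mem_Icc_of_abs_sub_le_one hdiag⟩
  · rintro γ ⟨hγ, -, hc⟩ γ' ⟨hγ', -, -⟩ heq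
    obtain ⟨hlower, htrace, hdiag⟩ := by simpa only [Prod.mk.injEq] using heq
    rw [hlower] at hdiag
    exact eq_of_lower_left_ne_zero hc (hγ.trans hγ'.symm) hlower htrace (sub_left_injective hdiag)

end LowerLeftNeZero

section LowerLeftEqZero

variable {R : Type*} [CommRing R]

lemma conj_repeated_diag_apply_zero_one (g : Matrix.SpecialLinearGroup (Fin 2) R) (a b : R) :
    (g⁻¹.val * !![a, b; 0, a] * g.val) 0 1 = b * g 1 1 ^ 2 := by
  simp only [Matrix.SpecialLinearGroup.coe_inv, Matrix.adjugate_fin_two, Matrix.mul_apply,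
    Fin.sum_univ_two, Matrix.of_apply, Matrix.cons_val', Matrix.cons_val_zero, Matrix.cons_val_one,
    Matrix.cons_val_fin_one]
  ring

lemma conj_repeated_diag_apply_one_zero (g : Matrix.SpecialLinearGroup (Fin 2) R) (a b : R) :
    (g⁻¹.val * !![a, b; 0, a] * g.val) 1 0 = -(b * g 1 0 ^ 2) := by
  simp only [Matrix.SpecialLinearGroup.coe_inv, Matrix.adjugate_fin_two, Matrix.mul_apply,
    Fin.sum_univ_two, Matrix.of_apply, Matrix.cons_val', Matrix.cons_val_zero, Matrix.cons_val_one,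
    Matrix.cons_val_fin_one]
  ring

lemma dvd_of_dvd_conj_repeated_diag {L a b : R} (g : Matrix.SpecialLinearGroup (Fin 2) R)
    (h₀₁ : L ∣ (g⁻¹.val * !![a, b; 0, a] * g.val) 0 1)
    (h₁₀ : L ∣ (g⁻¹.val * !![a, b; 0, a] * g.val) 1 0) : L ∣ b := by
  rw [conj_repeated_diag_apply_zero_one] at h₀₁
  rw [conj_repeated_diag_apply_one_zero, dvd_neg] at h₁₀
  have hdet : g 0 0 * g 1 1 - g 0 1 * g 1 0 = 1 := by rw [← Matrix.det_fin_two, g.det_coe]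
  obtain ⟨m, n, hmn⟩ : IsCoprime (g 1 1 ^ 2) (g 1 0 ^ 2) :=
    IsCoprime.pow ⟨g 0 0, -g 0 1, by linear_combination hdet⟩
  have hb : b = m * (b * g 1 1 ^ 2) + n * (b * g 1 0 ^ 2) := by linear_combination -b * hmn
  rw [hb]
  exact dvd_add (h₀₁.mul_left m) (h₁₀.mul_left n)

lemma exists_eq_translation_of_lower_left_eq_zero {γ : Matrix (Fin 2) (Fin 2) ℤ} (hγ : γ.det = 1)
    (hc : γ 1 0 = 0) : ∃ ε b : ℤ, (ε = -1 ∨ ε = 1) ∧ γ = !![ε, b; 0, ε] := by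
  rw [Matrix.det_fin_two, hc, mul_zero, sub_zero] at hγ
  obtain ⟨hε, had⟩ : (γ 0 0 = -1 ∨ γ 0 0 = 1) ∧ γ 1 1 = γ 0 0 := by
    rcases Int.mul_eq_one_iff_eq_one_or_neg_one.mp hγ with ⟨ha, hd⟩ | ⟨ha, hd⟩ <;> simp [ha, hd]
  exact ⟨γ 0 0, γ 0 1, hε, by rw [Matrix.eta_fin_two γ, hc, had]; rfl⟩

lemma abs_upper_right_le {z : ℂ} {δ : ℝ} {ε b : ℤ} (hz : 0 < z.im) (hε : ε ≠ 0)
    (hu : uInv (moeb !![ε, b; 0, ε] z) z ≤ δ) : |(b : ℝ)| ≤ √δ * |(ε : ℝ)| * z.im := by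
  have hdet : Matrix.det !![ε, b; 0, ε] = ε ^ 2 := by simp [Matrix.det_fin_two, sq]
  have hpoly : fixedPointPoly !![ε, b; 0, ε] z = b := by
    simp only [fixedPointPoly, Matrix.of_apply, Matrix.cons_val', Matrix.cons_val_zero,
      Matrix.cons_val_one, Matrix.cons_val_fin_one, Int.cast_zero]
    ring
  have hle := normSq_fixedPointPoly_le hz.ne' (hdet ▸ by positivity) hu
  rw [hdet, hpoly, Complex.normSq_intCast] at hle
  have hsq : (b : ℝ) ^ 2 ≤ δ * (ε * z.im) ^ 2 := by
    push_cast at hle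
    linarith
  calc |(b : ℝ)| ≤ √(δ * (ε * z.im) ^ 2) := Real.abs_le_sqrt hsq
    _ = √δ * |(ε : ℝ)| * z.im := by
      rw [Real.sqrt_mul' _ (sq_nonneg _), Real.sqrt_sq_eq_abs, abs_mul, abs_of_pos hz, mul_assoc]

lemma encard_translation_le {L : ℕ} (hL : L ≠ 0) (B : ℝ) :
    {γ : Matrix (Fin 2) (Fin 2) ℤ | ∃ ε b : ℤ, (ε = -1 ∨ ε = 1) ∧ (L : ℤ) ∣ b ∧ |(b : ℝ)| ≤ B ∧
      γ = !![ε, b; 0, ε]}.encard ≤ (2 * (2 * ⌊B / L⌋₊ + 1) : ℕ) := by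
  set N := ⌊B / L⌋₊
  let params : Finset (ℤ × ℤ) := {-1, 1} ×ˢ Finset.Icc (-(N : ℤ)) N
  have hcard : params.card = 2 * (2 * N + 1) := by
    rw [Finset.card_product, Int.card_Icc, Finset.card_pair (by norm_num)]
    lia
  rw [← hcard, ← Set.encard_coe_eq_coe_finsetCard]
  refine le_trans (Set.encard_le_encard ?_)
    (Set.encard_image_le (fun q : ℤ × ℤ ↦ !![q.1, L * q.2; 0, q.1]) params)
  rintro _ ⟨ε, _, hε, ⟨k, rfl⟩, hb, rfl⟩
  have hk : k.natAbs ≤ N := by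
    refine Nat.le_floor ((le_div_iff₀ (by positivity)).mpr ?_)
    simpa [abs_mul, mul_comm, Nat.cast_natAbs] using hb
  refine ⟨(ε, k), Finset.mem_coe.mpr (Finset.mem_product.mpr ⟨by simpa using hε, ?_⟩), rfl⟩
  exact Finset.mem_Icc.mpr ⟨by lia, by lia⟩

end LowerLeftEqZero

lemma Mcount_one_le {L : ℕ} (hL : L ≠ 0) {z : ℂ} (hz : 1 ≤ z.im)
    (g : Matrix.SpecialLinearGroup (Fin 2) ℤ) {δ : ℝ} (hδ : δ ≤ 1) :
    Mcount z g δ L 1 ≤ 60 + 2 * (2 * ⌊√δ * z.im / L⌋₊ + 1) := by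
  have hunion := (Set.encard_union_le _ _).trans
    (add_le_add (encard_lower_left_ne_zero_le hz hδ) (encard_translation_le hL (√δ * z.im)))
  refine ENat.toNat_le_of_le_natCast ((Set.encard_le_encard ?_).trans hunion)
  rintro γ ⟨hγ, hu, h₀₁, h₁₀⟩
  rcases ne_or_eq (γ 1 0) 0 with hc | hc
  · exact Or.inl ⟨hγ, hu, hc⟩
  · obtain ⟨ε, b, hε, rfl⟩ := exists_eq_translation_of_lower_left_eq_zero hγ hc
    have hε₀ : ε ≠ 0 := by lia
    have hεabs : |(ε : ℝ)| = 1 := by rcases hε with rfl | rfl <;> simp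
    have hb := abs_upper_right_le (by positivity) hε₀ hu
    rw [hεabs, mul_one] at hb
    exact Or.inr ⟨ε, b, hε, dvd_of_dvd_conj_repeated_diag g h₀₁ h₁₀, hb, rfl⟩

theorem stmt_18_general {L : ℕ} (hL : L ≠ 0) {z : ℂ} (hz : 1 ≤ z.im)
    (g : Matrix.SpecialLinearGroup (Fin 2) ℤ) {δ : ℝ} (hδ : δ ≤ 1) :
    (Mcount z g δ L 1 : ℝ) ≤ 62 * (1 + √δ * z.im / L) := by
  have hratio : 0 ≤ √δ * z.im / L := by positivity
  calc (Mcount z g δ L 1 : ℝ) ≤ 60 + 2 * (2 * ⌊√δ * z.im / L⌋₊ + 1) :=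
        mod_cast Mcount_one_le hL hz g hδ
    _ ≤ 60 + 2 * (2 * (√δ * z.im / L) + 1) := by gcongr; exact Nat.floor_le hratio
    _ ≤ 62 * (1 + √δ * z.im / L) := by linarith

/-- Counting bound for `M(z, g; δ', p^l, 1)`. -/
theorem stmt_18 :
    ∃ Cst : ℝ, 0 < Cst ∧
      ∀ (p : ℕ), p.Prime →
      ∀ l : ℕ, ∀ z : ℂ, 1 ≤ z.im →
      ∀ g : Matrix.SpecialLinearGroup (Fin 2) ℤ,
      ∀ δ : ℝ, 0 < δ → δ < 1 →
        (Mcount z g δ (p ^ l) 1 : ℝ) ≤ Cst * (1 + Real.sqrt δ * z.im / (p : ℝ) ^ l) := by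
  refine ⟨62, by norm_num, fun p hp l z hz g δ _ hδ ↦ ?_⟩
  exact_mod_cast stmt_18_general (pow_ne_zero l hp.ne_zero) hz g hδ.le
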